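/- Let H = (X, (s_i)_{i ∈ I}) be a hypergraph with correspondence τ and let f : X → {0,1,2} be a function with elements x ∈ f⁻¹(2) and y ∈ f⁻¹(1) such that x ∈ s_{τ(y)}. Then f is extensible if and only if f + χ_{{y}} is extensible, where f + χ_{{y}} is the function agreeing with f except that it maps y to f(y) + 1 = 2. -/

import Mathlib

/-- A Roman hitting set of the hypergraph given by the hyperedge family `s`:
a pair `(R1, R2)` such that every index `i` is in `R1` or `s i` meets `R2`. -/
def IsRHS {X I : Type*} (s : I → Set X) (R1 : Set I) (R2 : Set X) : Prop :=
  ∀ i : I, i ∈ R1 ∨ (s i ∩ R2).Nonempty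

/-- A minimal Roman hitting set: a rhs such that every rhs `(P1, P2) ≤ (R1, R2)`
equals `(R1, R2)`. -/
def IsMinimalRHS {X I : Type*} (s : I → Set X) (R1 : Set I) (R2 : Set X) : Prop :=
  IsRHS s R1 R2 ∧
    ∀ (P1 : Set I) (P2 : Set X), IsRHS s P1 P2 → P1 ⊆ R1 → P2 ⊆ R2 → P1 = R1 ∧ P2 = R2

/-- `D` is a hitting set of the subfamily `(s i)_{i ∈ J}`. -/
def IsHittingSet {X I : Type*} (s : I → Set X) (J : Set I) (D : Set X) : Prop :=
  ∀ i ∈ J, (D ∩ s i).Nonempty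

/-- `D` is a minimal hitting set of the subfamily `(s i)_{i ∈ J}`:
no proper subset of `D` is a hitting set of the subfamily. -/
def IsMinimalHittingSet {X I : Type*} (s : I → Set X) (J : Set I) (D : Set X) : Prop :=
  IsHittingSet s J D ∧ ∀ D' : Set X, D' ⊂ D → ¬ IsHittingSet s J D'

/-- A Roman hitting function for the hypergraph `s` with correspondence `τ`. -/
def IsRHF {X I : Type*} (s : I → Set X) (τ : X → I) (f : X → Fin 3) : Prop :=
  ∀ i : I, (∃ x ∈ s i, f x = 2) ∨ (∃ x : X, τ x = i ∧ f x = 1)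

/-- A minimal Roman hitting function: every rhf `g ≤ f` (pointwise) equals `f`. -/
def IsMinimalRHF {X I : Type*} (s : I → Set X) (τ : X → I) (f : X → Fin 3) : Prop :=
  IsRHF s τ f ∧ ∀ g : X → Fin 3, IsRHF s τ g → (∀ x, g x ≤ f x) → g = f

/-- `f` is extensible: some minimal rhf `g` satisfies `f ≤ g` pointwise. -/
def Extensible {X I : Type*} (s : I → Set X) (τ : X → I) (f : X → Fin 3) : Prop :=
  ∃ g : X → Fin 3, IsMinimalRHF s τ g ∧ ∀ x, f x ≤ g x

section

variable {X I : Type*} {s : I → Set X} {τ : X → I} {f f' g : X → Fin 3} {x y : X}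

theorem Extensible.mono (hf' : Extensible s τ f') (hle : f ≤ f') : Extensible s τ f := by
  obtain ⟨g, hg, hf'g⟩ := hf'
  exact ⟨g, hg, hle.trans hf'g⟩

-- The only hyperedge that a value `1` at `y` can serve is `s (τ y)`, and `x` hits it anyway.
theorem IsRHF.update_zero [DecidableEq X] (hg : IsRHF s τ g) (hx : g x = 2)
    (hxy : x ∈ s (τ y)) (hy : g y ≠ 2) : IsRHF s τ (Function.update g y 0) := by
  have update_eq_two {z : X} (hz : g z = 2) : Function.update g y 0 z = 2 := by
    rwa [Function.update_of_ne (ne_of_apply_ne g (hz.trans_ne hy.symm))]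
  intro i
  rcases hg i with ⟨z, hzi, hz⟩ | ⟨z, rfl, hz⟩
  · exact .inl ⟨z, hzi, update_eq_two hz⟩
  · rcases eq_or_ne z y with rfl | hzy
    · exact .inl ⟨x, hxy, update_eq_two hx⟩
    · exact .inr ⟨z, rfl, by rwa [Function.update_of_ne hzy]⟩

theorem IsMinimalRHF.ne_one_of_eq_two_of_mem (hg : IsMinimalRHF s τ g) (hx : g x = 2)
    (hxy : x ∈ s (τ y)) : g y ≠ 1 := by
  classical
  intro hy
  have hrhf : IsRHF s τ (Function.update g y 0) := hg.1.update_zero hx hxy (by simp [hy])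
  have hle : Function.update g y 0 ≤ g := update_le_self_iff.2 (Fin.zero_le _)
  have hy₀ : 0 = g y := Function.update_eq_self_iff.1 (hg.2 _ hrhf hle)
  simp [hy] at hy₀

theorem extensible_update_one_to_two_general [DecidableEq X] (hτ : ∀ x, x ∈ s (τ x))
    (hx : f x = 2) (hy : f y = 1) (hxy : x ∈ s (τ y)) :
    Extensible s τ f ↔ Extensible s τ (Function.update f y 2) := by
  constructor
  · rintro ⟨g, hg, hfg⟩
    have hgx : g x = 2 := Fin.last_le_iff.1 (hx.symm.trans_le (hfg x))
    have hgy : g y = 2 := by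
      have hne : g y ≠ 1 := hg.ne_one_of_eq_two_of_mem hgx hxy
      have hle : 1 ≤ g y := hy.symm.trans_le (hfg y)
      omega
    exact ⟨g, hg, update_le_iff.2 ⟨hgy.ge, fun z _ => hfg z⟩⟩
  · have hle : f ≤ Function.update f y 2 := le_update_self_iff.2 (by simp [hy])
    exact fun h => h.mono hle

end

/-- If `f x = 2`, `f y = 1` and `x ∈ s (τ y)`, then `f` is
extensible iff the function obtained from `f` by raising the value at `y`
to `2` is extensible. -/
theorem extensible_update_one_to_two {X I : Type*} [Fintype X] [Fintype I]
    [DecidableEq X] (s : I → Set X) (τ : X → I) (hτ : ∀ x, x ∈ s (τ x))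
    (f : X → Fin 3) (x y : X) (hx : f x = 2) (hy : f y = 1)
    (hxy : x ∈ s (τ y)) :
    Extensible s τ f ↔ Extensible s τ (Function.update f y 2) :=
  extensible_update_one_to_two_general hτ hx hy hxy
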